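/- Let k_1, ..., k_t be positive integers with Σ_{i=1}^t k_i = 2K, K ≥ 1. Consider candidates C = {a_1, p, b_1, b_2, b_3}, the axis a_1 L p L b_1 L b_2 L b_3, and the scoring vector ⟨4,3,2,0,0⟩. The nonmanipulators are one voter of weight 20K voting a_1 > p > b_1 > b_2 > b_3 and one voter of weight 8K voting b_1 > b_2 > b_3 > p > a_1. The manipulators have weights 4k_1, ..., 4k_t. Fix the scoring-rule extension E to be one of max, round down, or average. Then there exist weak-order votes for the manipulators, each single-peaked with respect to the axis, such that p is a winner (no candidate has strictly greater total weighted score under ⟨4,3,2,0,0⟩ with extension E) if and only if there exists a subset I ⊆ {1,...,t} with Σ_{i∈I} k_i = K. -/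

import Mathlib

open scoped Classical

section Defs

variable {C : Type*}

/-- Strict preference: `a` is strictly preferred to `b` in the vote `v`. -/
def SPref (v : C → C → Prop) (a b : C) : Prop := v a b ∧ ¬ v b a

/-- Indifference (a tie) between `a` and `b` in the vote `v`. -/
def Indiff (v : C → C → Prop) (a b : C) : Prop := v a b ∧ v b a

/-- A weak order: a complete (hence reflexive) and transitive binary relation. -/
def IsWeakOrder (v : C → C → Prop) : Prop := (∀ a b, v a b ∨ v b a) ∧ Transitive v

/-- A total (linear) order: an antisymmetric weak order. -/
def IsTotalOrderRel (v : C → C → Prop) : Prop :=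
  IsWeakOrder v ∧ ∀ a b, v a b → v b a → a = b

/-- A top order: a weak order all of whose ties are within the least-preferred
indifference class. -/
def IsTopOrder (v : C → C → Prop) : Prop :=
  IsWeakOrder v ∧ ∀ a b, a ≠ b → Indiff v a b → ∀ c, v c a

/-- `c` is among the most preferred candidates of `v`. -/
def TopCand (v : C → C → Prop) (c : C) : Prop := ∀ d, v c d

/-- `v` is single-peaked w.r.t. the axis `A`: there is a peak `p` (which is then the
unique most preferred candidate) such that `v` is strictly increasing along the part of
the axis up to `p` and strictly decreasing along the part of the axis after `p`. -/
def IsSinglePeaked (A : LinearOrder C) (v : C → C → Prop) : Prop :=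
  ∃ p : C, (∀ a b, A.lt a b → A.le b p → SPref v b a) ∧
           (∀ a b, A.le p a → A.lt a b → SPref v a b)

/-- `v` is single-plateaued w.r.t. the axis `A`: the axis splits into segments `X,Y,Z`
where the interval `Y = [y₁, y₂]` consists exactly of the most preferred candidates,
`v` is strictly increasing along `X` and strictly decreasing along `Z`. -/
def IsSinglePlateaued (A : LinearOrder C) (v : C → C → Prop) : Prop :=
  ∃ y₁ y₂ : C, A.le y₁ y₂ ∧ (∀ c, (A.le y₁ c ∧ A.le c y₂) ↔ TopCand v c) ∧
    (∀ a b, A.lt a b → A.le b y₁ → SPref v b a) ∧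
    (∀ a b, A.le y₂ a → A.lt a b → SPref v a b)

/-- `v` is possibly single-peaked w.r.t. the axis `A`: `v` is weakly increasing along
the axis up to some point `p` and weakly decreasing afterwards (so the most preferred
candidates form an interval `Y` around `p`). -/
def IsPossiblySinglePeaked (A : LinearOrder C) (v : C → C → Prop) : Prop :=
  ∃ p : C, (∀ a b, A.lt a b → A.le b p → v b a) ∧
           (∀ a b, A.le p a → A.lt a b → v a b)

/-- `v` is single-peaked with outside options w.r.t. the axis `A`: the axis splits into
segments `O₁,X,Y,Z,O₂` where the inner interval `[l,r]` (split into `X`, the peak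
`Y = {p}`, and `Z`) is single-peaked, every inner candidate is strictly preferred to
every outside candidate, and all outside candidates are mutually indifferent. -/
def IsSPOutsideOptions (A : LinearOrder C) (v : C → C → Prop) : Prop :=
  ∃ l p r : C, A.le l p ∧ A.le p r ∧
    (∀ a b, A.le l a → A.lt a b → A.le b p → SPref v b a) ∧
    (∀ a b, A.le p a → A.lt a b → A.le b r → SPref v a b) ∧
    (∀ a b, A.le l a → A.le a r → ¬ (A.le l b ∧ A.le b r) → SPref v a b) ∧
    (∀ a b, ¬ (A.le l a ∧ A.le a r) → ¬ (A.le l b ∧ A.le b r) → Indiff v a b)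

/-- The number of candidates strictly preferred to `c` (the `k_i` of `c`'s class). -/
noncomputable def aboveCount [Fintype C] (v : C → C → Prop) (c : C) : ℕ :=
  Nat.card {d : C // SPref v d c}

/-- The size of `c`'s indifference class (including `c` itself). -/
noncomputable def tiedCount [Fintype C] (v : C → C → Prop) (c : C) : ℕ :=
  Nat.card {d : C // Indiff v d c}

/-- The number of indifference classes strictly below `c`'s class. -/
noncomputable def classesBelow [Fintype C] (v : C → C → Prop) (c : C) : ℕ :=
  Set.ncard ((fun d => aboveCount v d) '' {d : C | SPref v c d})

/-- An `m`-candidate scoring vector, indexed by positions `1..m`: `α 1 ≥ α 2 ≥ ... ≥ α m`. -/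
def IsScoringVec (m : ℕ) (α : ℕ → ℕ) : Prop :=
  ∀ i j, 1 ≤ i → i ≤ j → j ≤ m → α j ≤ α i

/-- The four scoring-rule extensions: min, max, round down, and average. -/
inductive ScoreExt : Type
  | emin | emax | eroundDown | eaverage

/-- The score of candidate `c` in a weak-order vote `v` under the scoring vector `α`
(for `m` candidates) with scoring-rule extension `E`: writing the vote as indifference
classes `G₁ > ... > G_r` and `k_i = |G₁| + ... + |G_{i-1}|`, a candidate in `G_i` scores
`α (k_i + |G_i|)` under min, `α (k_i + 1)` under max, `α (m - r + i)` under round down,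
and `(α (k_i + 1) + ... + α (k_i + |G_i|)) / |G_i|` under average. -/
noncomputable def extScore [Fintype C] (m : ℕ) (α : ℕ → ℕ) (E : ScoreExt)
    (v : C → C → Prop) (c : C) : ℚ :=
  match E with
  | .emin => α (aboveCount v c + tiedCount v c)
  | .emax => α (aboveCount v c + 1)
  | .eroundDown => α (m - classesBelow v c)
  | .eaverage =>
      (∑ j ∈ Finset.Icc (aboveCount v c + 1) (aboveCount v c + tiedCount v c), (α j : ℚ))
        / (tiedCount v c : ℚ)

/-- The total weighted score of candidate `c` for a weighted profile `S`
(a list of weight/vote pairs). -/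
noncomputable def profScore [Fintype C] (m : ℕ) (α : ℕ → ℕ) (E : ScoreExt)
    (S : List (ℕ × (C → C → Prop))) (c : C) : ℚ :=
  (S.map (fun wv => (wv.1 : ℚ) * extScore m α E wv.2 c)).sum

/-- The total weight of the voters in `S` strictly preferring `a` to `b`. -/
noncomputable def prefWeight (S : List (ℕ × (C → C → Prop))) (a b : C) : ℕ :=
  (S.map (fun wv => if SPref wv.2 a b then wv.1 else 0)).sum

end Defs

/-- The scoring vector `⟨4,3,2,0,0⟩`, indexed by positions `1,...,5`. -/
def scvec : ℕ → ℕ := fun i => [0, 4, 3, 2, 0, 0].getD i 0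

/-- The candidates: `a₁` is `0`, `p` is `1`, `b₁` is `2`, `b₂` is `3`, `b₃` is `4`;
the axis is the natural order `a₁ L p L b₁ L b₂ L b₃` on `Fin 5`.
The vote `a₁ > p > b₁ > b₂ > b₃`. -/
def voteA : Fin 5 → Fin 5 → Prop := fun x y => x ≤ y

/-- The vote `b₁ > b₂ > b₃ > p > a₁` (given via its rank function). -/
def voteB : Fin 5 → Fin 5 → Prop := fun x y => (![4, 3, 0, 1, 2] x : ℕ) ≤ ![4, 3, 0, 1, 2] y

/-!
Only two leads of `p` matter: `x` over `a₁` and `y` over `b₁`. Together the nonmanipulators leave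
`p` behind `a₁` by `20K` and behind `b₁` by `12K`, so the manipulators need `∑ kᵢ xᵢ ≥ 5K` and
`∑ kᵢ yᵢ ≥ 3K`, hence `∑ kᵢ (xᵢ + 3yᵢ) ≥ 14K = 7 ∑ kᵢ`. A single-peaked vote either ranks `b₁`
above `p`, and then `x + 3y ≤ 4`, or it is the chain `p > b₁ > b₂ > b₃` with `a₁` inserted at one
of nine places, and then `x + 3y ≤ 7` with equality only for `(x, y) = (4, 1)` and `(1, 2)`. So
every manipulator of positive weight has one of these two pairs of leads, and the two
inequalities force those with `(4, 1)` to have exactly half of the weight.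
-/

section WeakOrder

variable {C β : Type*} [LinearOrder β] {v : C → C → Prop} {f : C → β}

/-- The weak order given by a rank function, a smaller rank being better. -/
def rankVote (f : C → β) : C → C → Prop := fun a b => f a ≤ f b

theorem isWeakOrder_rankVote (f : C → β) : IsWeakOrder (rankVote f) :=
  ⟨fun a b => le_total (f a) (f b), fun _ _ _ => le_trans⟩

theorem spref_rankVote {a b : C} : SPref (rankVote f) a b ↔ f a < f b :=
  lt_iff_le_not_ge.symm

theorem indiff_rankVote {a b : C} : Indiff (rankVote f) a b ↔ f a = f b :=
  le_antisymm_iff.symm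

theorem IsWeakOrder.aboveCount_mono [Fintype C] (hv : IsWeakOrder v) {a b : C} (hab : v a b) :
    aboveCount v a ≤ aboveCount v b :=
  Set.ncard_le_ncard (s := {c | SPref v c a}) (t := {c | SPref v c b})
    fun _ hc => ⟨hv.2 hc.1 hab, fun hbc => hc.2 (hv.2 hab hbc)⟩

theorem IsWeakOrder.aboveCount_lt [Fintype C] (hv : IsWeakOrder v) {a b : C} (hab : SPref v a b) :
    aboveCount v a < aboveCount v b :=
  Set.ncard_lt_ncard (s := {c | SPref v c a}) (t := {c | SPref v c b})
    ⟨fun _ hc => ⟨hv.2 hc.1 hab.1, fun hbc => hc.2 (hv.2 hab.1 hbc)⟩,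
      fun hsub => (hsub hab).2 (hsub hab).1⟩

theorem IsWeakOrder.eq_rankVote_aboveCount [Fintype C] (hv : IsWeakOrder v) :
    v = rankVote (aboveCount v) := by
  funext a b
  refine propext ⟨hv.aboveCount_mono, fun hle => ?_⟩
  by_contra hab
  exact (hv.aboveCount_lt ⟨(hv.1 a b).resolve_left hab, hab⟩).not_ge hle

theorem IsSinglePeaked.spref_or_forall_spref [A : LinearOrder C] (hv : IsSinglePeaked A v)
    {a b : C} (hab : a ⋖ b) : SPref v b a ∨ ∀ c d, a ≤ c → c < d → SPref v c d := by
  obtain ⟨q, hleft, hright⟩ := hv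
  rcases le_or_gt q a with hq | hq
  · exact Or.inr fun c d hac hcd => hright c d (hq.trans hac) hcd
  · exact Or.inl (hleft a b hab.lt (hab.ge_of_gt hq))

end WeakOrder

section Score

variable {C β : Type*} [Fintype C] [LinearOrder β] {v : C → C → Prop} {f : C → β}
  {m : ℕ} {α : ℕ → ℕ} {E : ScoreExt}

/-- The number of candidates of strictly smaller rank than `c`: `aboveCount` for rank votes. -/
def rankAbove (f : C → β) (c : C) : ℕ := (Finset.univ.filter fun d => f d < f c).card

/-- The number of candidates of the same rank as `c`: `tiedCount` for rank votes. -/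
def rankTied (f : C → β) (c : C) : ℕ := (Finset.univ.filter fun d => f d = f c).card

/-- The number of indifference classes of strictly larger rank than `c`: `classesBelow` for rank
votes, with a class identified by the common value of `rankAbove` on it. -/
def rankBelow (f : C → β) (c : C) : ℕ :=
  ((Finset.univ.filter fun d => f c < f d).image (rankAbove f)).card

/-- The score under `α` with extension `E` of a candidate that has `a` candidates above it, whose
indifference class has `t` members, and that has `b` indifference classes below it. -/
def positionScore (m : ℕ) (α : ℕ → ℕ) (E : ScoreExt) (a t b : ℕ) : ℚ :=
  match E with
  | .emin => α (a + t)
  | .emax => α (a + 1)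
  | .eroundDown => α (m - b)
  | .eaverage => (∑ j ∈ Finset.Icc (a + 1) (a + t), (α j : ℚ)) / t

theorem aboveCount_rankVote (f : C → β) : aboveCount (rankVote f) = rankAbove f := by
  funext c
  simp only [aboveCount, rankAbove, spref_rankVote, Nat.card_eq_fintype_card,
    Fintype.card_subtype]

theorem tiedCount_rankVote (f : C → β) : tiedCount (rankVote f) = rankTied f := by
  funext c
  simp only [tiedCount, rankTied, indiff_rankVote, Nat.card_eq_fintype_card,
    Fintype.card_subtype]

theorem classesBelow_rankVote (f : C → β) : classesBelow (rankVote f) = rankBelow f := by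
  funext c
  simp only [classesBelow, rankBelow, spref_rankVote, aboveCount_rankVote,
    ← Set.ncard_coe_finset, Finset.coe_image, Finset.coe_filter_univ]

theorem extScore_rankVote (m : ℕ) (α : ℕ → ℕ) (E : ScoreExt) (f : C → β) (c : C) :
    extScore m α E (rankVote f) c =
      positionScore m α E (rankAbove f c) (rankTied f c) (rankBelow f c) := by
  cases E <;> simp only [extScore, positionScore, aboveCount_rankVote, tiedCount_rankVote,
    classesBelow_rankVote]

theorem rankTied_pos (f : C → β) (c : C) : 0 < rankTied f c :=
  Finset.card_pos.2 ⟨c, by simp⟩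

theorem rankAbove_add_rankTied (f : C → β) (c : C) :
    rankAbove f c + rankTied f c = (Finset.univ.filter fun d => f d ≤ f c).card := by
  simp only [le_iff_lt_or_eq, Finset.filter_or, rankAbove, rankTied]
  exact (Finset.card_union_of_disjoint
    (Finset.disjoint_filter.2 fun _ _ hlt => hlt.ne)).symm

theorem rankAbove_add_rankTied_le_card (f : C → β) (c : C) :
    rankAbove f c + rankTied f c ≤ Fintype.card C :=
  (rankAbove_add_rankTied f c).trans_le (Finset.card_le_univ _)

theorem rankAbove_add_rankTied_le_rankAbove {c d : C} (hcd : f c < f d) :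
    rankAbove f c + rankTied f c ≤ rankAbove f d :=
  (rankAbove_add_rankTied f c).trans_le <| Finset.card_le_card <|
    Finset.monotone_filter_right _ fun _ _ he => he.trans_lt hcd

theorem rankBelow_lt_card (f : C → β) (c : C) : rankBelow f c < Fintype.card C :=
  Finset.card_image_le.trans_lt <| Finset.card_lt_univ_of_notMem (x := c) (by simp)

theorem rankBelow_anti {c d : C} (hcd : f c < f d) : rankBelow f d ≤ rankBelow f c :=
  Finset.card_le_card <| Finset.image_subset_image <|
    Finset.monotone_filter_right _ fun _ _ he => hcd.trans he


theorem IsScoringVec.average_mem_Icc (hα : IsScoringVec m α) {a t : ℕ} (ht : 0 < t)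
    (hm : a + t ≤ m) :
    (∑ j ∈ Finset.Icc (a + 1) (a + t), (α j : ℚ)) / t ∈
      Set.Icc (α (a + t) : ℚ) (α (a + 1)) := by
  have hcard : (Finset.Icc (a + 1) (a + t)).card = t := by simp
  have hlower := Finset.card_nsmul_le_sum (Finset.Icc (a + 1) (a + t)) (fun j => (α j : ℚ))
    (α (a + t)) fun j hj => by
      obtain ⟨hj₁, hj₂⟩ := Finset.mem_Icc.1 hj
      exact_mod_cast hα j (a + t) (by lia) hj₂ hm
  have hupper := Finset.sum_le_card_nsmul (Finset.Icc (a + 1) (a + t)) (fun j => (α j : ℚ))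
    (α (a + 1)) fun j hj => by
      obtain ⟨hj₁, hj₂⟩ := Finset.mem_Icc.1 hj
      exact_mod_cast hα (a + 1) j (by lia) hj₁ (hj₂.trans hm)
  rw [hcard, nsmul_eq_mul, mul_comm] at hlower hupper
  have ht' : (0 : ℚ) < t := by exact_mod_cast ht
  exact ⟨(le_div_iff₀ ht').2 hlower, (div_le_iff₀ ht').2 hupper⟩

theorem IsScoringVec.positionScore_le_first (hα : IsScoringVec m α) (E : ScoreExt) {a t b : ℕ}
    (ht : 0 < t) (hm : a + t ≤ m) (hb : b < m) : positionScore m α E a t b ≤ α 1 := by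
  have hfirst {j : ℕ} (hj : 1 ≤ j) (hjm : j ≤ m) : (α j : ℚ) ≤ α 1 := by
    exact_mod_cast hα 1 j le_rfl hj hjm
  cases E with
  | emin => exact hfirst (by lia) hm
  | emax => exact hfirst (by lia) (by lia)
  | eroundDown => exact hfirst (by lia) (by lia)
  | eaverage => exact (hα.average_mem_Icc ht hm).2.trans (hfirst (by lia) (by lia))

theorem IsScoringVec.positionScore_anti (hα : IsScoringVec m α) (E : ScoreExt)
    {a t b a' t' b' : ℕ} (ht : 0 < t) (haa' : a + t ≤ a') (ht' : 0 < t') (hm : a' + t' ≤ m)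
    (hbb' : b' ≤ b) (hb : b < m) :
    positionScore m α E a' t' b' ≤ positionScore m α E a t b := by
  have hanti {i j : ℕ} (hi : 1 ≤ i) (hij : i ≤ j) (hj : j ≤ m) : (α j : ℚ) ≤ α i := by
    exact_mod_cast hα i j hi hij hj
  cases E with
  | emin => exact hanti (by lia) (by lia) hm
  | emax => exact hanti (by lia) (by lia) (by lia)
  | eroundDown => exact hanti (by lia) (by lia) (by lia)
  | eaverage =>
    calc _ ≤ (α (a' + 1) : ℚ) := (hα.average_mem_Icc ht' hm).2
      _ ≤ α (a + t) := hanti (by lia) (by lia) (by lia)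
      _ ≤ _ := (hα.average_mem_Icc ht (by lia)).1

theorem extScore_nonneg (m : ℕ) (α : ℕ → ℕ) (E : ScoreExt) (v : C → C → Prop) (c : C) :
    0 ≤ extScore m α E v c := by
  cases E <;> simp only [extScore] <;> positivity

theorem IsWeakOrder.extScore_le_first (hv : IsWeakOrder v)
    (hα : IsScoringVec (Fintype.card C) α) (E : ScoreExt) (c : C) :
    extScore (Fintype.card C) α E v c ≤ α 1 := by
  rw [hv.eq_rankVote_aboveCount, extScore_rankVote]
  exact hα.positionScore_le_first E (rankTied_pos _ c) (rankAbove_add_rankTied_le_card _ c)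
    (rankBelow_lt_card _ c)

theorem IsWeakOrder.extScore_le_of_spref (hv : IsWeakOrder v)
    (hα : IsScoringVec (Fintype.card C) α) (E : ScoreExt) {c d : C} (hcd : SPref v c d) :
    extScore (Fintype.card C) α E v d ≤ extScore (Fintype.card C) α E v c := by
  rw [hv.eq_rankVote_aboveCount, extScore_rankVote, extScore_rankVote]
  have hlt := hv.aboveCount_lt hcd
  exact hα.positionScore_anti E (rankTied_pos _ c) (rankAbove_add_rankTied_le_rankAbove hlt)
    (rankTied_pos _ d) (rankAbove_add_rankTied_le_card _ d) (rankBelow_anti hlt)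
    (rankBelow_lt_card _ c)

theorem profScore_append (m : ℕ) (α : ℕ → ℕ) (E : ScoreExt) (S T : List (ℕ × (C → C → Prop)))
    (c : C) : profScore m α E (S ++ T) c = profScore m α E S c + profScore m α E T c := by
  simp only [profScore, List.map_append, List.sum_append]

theorem profScore_ofFn (m : ℕ) (α : ℕ → ℕ) (E : ScoreExt) {t : ℕ} (w : Fin t → ℕ)
    (tv : Fin t → C → C → Prop) (c : C) :
    profScore m α E (List.ofFn fun i => (w i, tv i)) c =
      ∑ i, (w i : ℚ) * extScore m α E (tv i) c := by
  simp only [profScore, List.map_ofFn, List.sum_ofFn, Function.comp_apply]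

end Score

section Leads

/-- The leads `x` of `p` over `a₁` and `y` of `p` over `b₁` in one vote lie below the line
`x + 3 * y = 7`, or are one of the two points on it that a single-peaked vote can reach. -/
def LeadsBounded (x y : ℚ) : Prop := (x = 4 ∧ y = 1) ∨ (x = 1 ∧ y = 2) ∨ x + 3 * y < 7

theorem LeadsBounded.add_three_mul_le {x y : ℚ} (h : LeadsBounded x y) : x + 3 * y ≤ 7 := by
  rcases h with ⟨rfl, rfl⟩ | ⟨rfl, rfl⟩ | h
  · norm_num
  · norm_num
  · exact h.le

variable {ι : Type*} [Fintype ι] {w : ι → ℕ} {K : ℕ} {x y : ι → ℚ}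

theorem eq_zero_or_tight_of_leadsBounded (hsum : ∑ i, w i = 2 * K)
    (hxy : ∀ i, LeadsBounded (x i) (y i)) (hx : 5 * K ≤ ∑ i, w i * x i)
    (hy : 3 * K ≤ ∑ i, w i * y i) (i : ι) :
    w i = 0 ∨ (x i = 4 ∧ y i = 1) ∨ (x i = 1 ∧ y i = 2) := by
  have hle : ∀ i ∈ Finset.univ, w i * (x i + 3 * y i) ≤ w i * 7 := fun i _ =>
    mul_le_mul_of_nonneg_left (hxy i).add_three_mul_le (Nat.cast_nonneg _)
  have hge : ∑ i, w i * (7 : ℚ) ≤ ∑ i, w i * (x i + 3 * y i) :=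
    calc ∑ i, w i * (7 : ℚ) = 5 * K + 3 * (3 * K) := by
          rw [← Finset.sum_mul, ← Nat.cast_sum, hsum]
          push_cast
          ring
      _ ≤ ∑ i, w i * x i + 3 * ∑ i, w i * y i := by gcongr
      _ = ∑ i, w i * (x i + 3 * y i) := by
          simp only [mul_add, Finset.sum_add_distrib, Finset.mul_sum, mul_left_comm]
  have heq := (Finset.sum_eq_sum_iff_of_le hle).1 ((Finset.sum_le_sum hle).antisymm hge) i
    (Finset.mem_univ i)
  rcases hxy i with h | h | h
  · exact Or.inr (Or.inl h)
  · exact Or.inr (Or.inr h)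
  · exact Or.inl (by simpa [h.ne] using heq)

theorem exists_finset_sum_eq_of_leadsBounded (hsum : ∑ i, w i = 2 * K)
    (hxy : ∀ i, LeadsBounded (x i) (y i)) (hx : 5 * K ≤ ∑ i, w i * x i)
    (hy : 3 * K ≤ ∑ i, w i * y i) : ∃ I : Finset ι, ∑ i ∈ I, w i = K := by
  have htight := eq_zero_or_tight_of_leadsBounded hsum hxy hx hy
  have hsum' : ∑ i, (w i : ℚ) = 2 * K := by exact_mod_cast hsum
  let I : Finset ι := Finset.univ.filter fun i => x i = 4
  have hxI : ∑ i, w i * x i = ∑ i, (w i : ℚ) + 3 * ∑ i ∈ I, (w i : ℚ) := by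
    rw [Finset.sum_filter, Finset.mul_sum, ← Finset.sum_add_distrib]
    refine Finset.sum_congr rfl fun i _ => ?_
    rcases htight i with h | ⟨h, -⟩ | ⟨h, -⟩
    · simp [h]
    · rw [h, if_pos rfl]
      ring
    · rw [h, if_neg (by norm_num)]
      ring
  have hyI : ∑ i, w i * y i = 2 * ∑ i, (w i : ℚ) - ∑ i ∈ I, (w i : ℚ) := by
    rw [Finset.sum_filter, Finset.mul_sum, ← Finset.sum_sub_distrib]
    refine Finset.sum_congr rfl fun i _ => ?_
    rcases htight i with h | ⟨h, h'⟩ | ⟨h, h'⟩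
    · simp [h]
    · rw [h, h', if_pos rfl]
      ring
    · rw [h, h', if_neg (by norm_num)]
      ring
  have hI : ∑ i ∈ I, (w i : ℚ) = K := by linarith
  exact ⟨I, by exact_mod_cast hI⟩

theorem sum_mul_ite_mem_of_sum_eq [DecidableEq ι] {R : Type*} [NonAssocSemiring R]
    (hsum : ∑ i, w i = 2 * K) {I : Finset ι} (hI : ∑ i ∈ I, w i = K) (a b : R) :
    ∑ i, w i * (if i ∈ I then a else b) = K * (a + b) := by
  have hIc : ∑ i ∈ Iᶜ, w i = K := by
    have := Finset.sum_add_sum_compl I w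
    lia
  calc ∑ i, w i * (if i ∈ I then a else b)
      = ∑ i ∈ I, w i * a + ∑ i ∈ Iᶜ, w i * b := by
        rw [← Finset.sum_add_sum_compl I]
        congr 1 <;> refine Finset.sum_congr rfl fun i hi => ?_
        · rw [if_pos hi]
        · rw [if_neg (Finset.mem_compl.1 hi)]
    _ = K * (a + b) := by
        rw [← Finset.sum_mul, ← Finset.sum_mul, ← Nat.cast_sum, ← Nat.cast_sum, hI, hIc, mul_add]

end Leads

section Insertion

variable {β : Type*} [LinearOrder β] {n : ℕ}

/-- The ranks when candidate `0` is inserted at rank `j` into the chain `1 > 2 > ⋯ > n`, whose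
members have the odd ranks `1, 3, …, 2n - 1`: into a gap of the chain for even `j`, and tied with
a member of it for odd `j`. -/
def insertionRank (j : Fin (2 * n + 1)) : Fin (n + 1) → ℕ :=
  Fin.cons (j : ℕ) fun i : Fin n => 2 * (i : ℕ) + 1

theorem exists_chain_position {h : Fin n → β} (hh : StrictMono h) (y : β) :
    ∃ j : Fin (2 * n + 1), ∀ i : Fin n,
      (y ≤ h i ↔ (j : ℕ) ≤ 2 * i + 1) ∧ (h i ≤ y ↔ 2 * i + 1 ≤ (j : ℕ)) := by
  induction n with
  | zero => exact ⟨0, fun i => i.elim0⟩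
  | succ n ih =>
    have hlast (i : Fin n) : h i.castSucc < h (Fin.last n) := hh i.castSucc_lt_last
    rcases lt_trichotomy y (h (Fin.last n)) with hy | rfl | hy
    · obtain ⟨j, hj⟩ := ih (hh.comp Fin.strictMono_castSucc)
      refine ⟨⟨j, by lia⟩, Fin.lastCases ?_ hj⟩
      simp only [hy.le, hy.not_ge, Fin.val_last, true_iff, false_iff]
      lia
    · refine ⟨⟨2 * n + 1, by lia⟩, Fin.lastCases (by simp) fun i => ?_⟩
      simp only [(hlast i).le, (hlast i).not_ge, Fin.val_castSucc, true_iff, false_iff]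
      lia
    · refine ⟨⟨2 * n + 2, by lia⟩, Fin.lastCases ?_ fun i => ?_⟩
      · simp only [hy.le, hy.not_ge, Fin.val_last, true_iff, false_iff]
        lia
      · have hi := (hlast i).trans hy
        simp only [hi.le, hi.not_ge, Fin.val_castSucc, true_iff, false_iff]
        lia

theorem IsWeakOrder.exists_eq_rankVote_insertionRank {v : Fin (n + 1) → Fin (n + 1) → Prop}
    (hv : IsWeakOrder v) (hchain : ∀ i k : Fin n, i < k → SPref v i.succ k.succ) :
    ∃ j, v = rankVote (insertionRank j) := by
  obtain ⟨f, rfl⟩ : ∃ f : Fin (n + 1) → ℕ, v = rankVote f := ⟨_, hv.eq_rankVote_aboveCount⟩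
  have hmono : StrictMono fun i : Fin n => f i.succ := fun i k hik =>
    spref_rankVote.1 (hchain i k hik)
  obtain ⟨j, hj⟩ := exists_chain_position hmono (f 0)
  refine ⟨j, funext₂ fun a b => propext ?_⟩
  simp only [rankVote, insertionRank]
  cases a using Fin.cases with
  | zero =>
    cases b using Fin.cases with
    | zero => simp
    | succ k => simpa using (hj k).1
  | succ i =>
    cases b using Fin.cases with
    | zero => simpa using (hj i).2
    | succ k => simpa using hmono.le_iff_le

end Insertion

section Manipulation

/-- The lead of `p` (candidate `1`) over the candidate `d` in the vote `v`. -/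
noncomputable def lead (E : ScoreExt) (v : Fin 5 → Fin 5 → Prop) (d : Fin 5) : ℚ :=
  extScore 5 scvec E v 1 - extScore 5 scvec E v d

theorem isSinglePeaked_insertionRank {j : Fin 9} (hj : 1 < j) :
    IsSinglePeaked (inferInstance : LinearOrder (Fin 5)) (rankVote (insertionRank j)) := by
  refine ⟨1, ?_, ?_⟩ <;> simp only [spref_rankVote] <;> decide +revert

theorem isScoringVec_scvec : IsScoringVec 5 scvec := by
  intro i j hi hij hj
  interval_cases j <;> interval_cases i <;> decide

theorem lead_emax_insertionRank (j : Fin 9) :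
    lead .emax (rankVote (insertionRank j)) 0 = ![-1, 0, 1, 1, 2, 2, 4, 4, 4] j ∧
      lead .emax (rankVote (insertionRank j)) 2 = ![1, 2, 2, 1, 1, 1, 1, 1, 1] j := by
  simp only [lead, extScore_rankVote]
  decide +kernel +revert

theorem lead_eroundDown_insertionRank (j : Fin 9) :
    lead .eroundDown (rankVote (insertionRank j)) 0 = ![-1, 0, 1, 1, 2, 3, 4, 3, 4] j ∧
      lead .eroundDown (rankVote (insertionRank j)) 2 = ![1, 1, 2, 1, 1, 1, 1, 1, 1] j := by
  simp only [lead, extScore_rankVote]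
  decide +kernel +revert

theorem lead_eaverage_insertionRank (j : Fin 9) :
    lead .eaverage (rankVote (insertionRank j)) 0 = ![-1, 0, 1, 3 / 2, 2, 3, 4, 4, 4] j ∧
      lead .eaverage (rankVote (insertionRank j)) 2 = ![1, 3 / 2, 2, 3 / 2, 1, 1, 1, 1, 1] j := by
  simp only [lead, extScore_rankVote]
  decide +kernel +revert

theorem leadsBounded_insertionRank {E : ScoreExt}
    (hE : E = ScoreExt.emax ∨ E = ScoreExt.eroundDown ∨ E = ScoreExt.eaverage) (j : Fin 9) :
    LeadsBounded (lead E (rankVote (insertionRank j)) 0)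
      (lead E (rankVote (insertionRank j)) 2) := by
  rcases hE with rfl | rfl | rfl
  · rw [LeadsBounded, (lead_emax_insertionRank j).1, (lead_emax_insertionRank j).2]
    decide +kernel +revert
  · rw [LeadsBounded, (lead_eroundDown_insertionRank j).1, (lead_eroundDown_insertionRank j).2]
    decide +kernel +revert
  · rw [LeadsBounded, (lead_eaverage_insertionRank j).1, (lead_eaverage_insertionRank j).2]
    decide +kernel +revert

theorem lead_insertionRank_two (E : ScoreExt) :
    lead E (rankVote (insertionRank 2)) = ![1, 0, 2, 4, 4] := by
  funext d
  simp only [lead, extScore_rankVote]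
  cases E <;> decide +kernel +revert

theorem lead_insertionRank_eight (E : ScoreExt) :
    lead E (rankVote (insertionRank 8)) = ![4, 0, 1, 2, 4] := by
  funext d
  simp only [lead, extScore_rankVote]
  cases E <;> decide +kernel +revert

theorem leadsBounded_of_isSinglePeaked {E : ScoreExt}
    (hE : E = ScoreExt.emax ∨ E = ScoreExt.eroundDown ∨ E = ScoreExt.eaverage)
    {v : Fin 5 → Fin 5 → Prop} (hv : IsWeakOrder v)
    (hsp : IsSinglePeaked (inferInstance : LinearOrder (Fin 5)) v) :
    LeadsBounded (lead E v 0) (lead E v 2) := by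
  rcases hsp.spref_or_forall_spref (a := 1) (b := 2) ⟨by decide, by decide⟩ with h₂₁ | hchain
  · have hp : extScore 5 scvec E v 1 ≤ 4 := hv.extScore_le_first isScoringVec_scvec E 1
    have ha : 0 ≤ extScore 5 scvec E v 0 := extScore_nonneg 5 scvec E v 0
    have hb : extScore 5 scvec E v 1 ≤ extScore 5 scvec E v 2 :=
      hv.extScore_le_of_spref isScoringVec_scvec E h₂₁
    refine Or.inr (Or.inr ?_)
    rw [lead, lead]
    linarith
  · obtain ⟨j, rfl⟩ := hv.exists_eq_rankVote_insertionRank fun i k hik =>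
      hchain i.succ k.succ (Fin.succ_le_succ_iff.2 (Fin.zero_le i)) (Fin.succ_lt_succ_iff.2 hik)
    exact leadsBounded_insertionRank hE j

theorem extScore_voteA (E : ScoreExt) : extScore 5 scvec E voteA = ![4, 3, 2, 0, 0] := by
  funext d
  refine (extScore_rankVote 5 scvec E id d).trans ?_
  cases E <;> decide +kernel +revert

theorem extScore_voteB (E : ScoreExt) : extScore 5 scvec E voteB = ![0, 0, 4, 3, 2] := by
  funext d
  refine (extScore_rankVote 5 scvec E ![4, 3, 0, 1, 2] d).trans ?_
  cases E <;> decide +kernel +revert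

/-- The amount, in units of `4K`, by which the nonmanipulators leave `p` behind each candidate:
`20 * ⟨4, 3, 2, 0, 0⟩ + 8 * ⟨0, 0, 4, 3, 2⟩ = ⟨80, 60, 72, 24, 16⟩`. -/
def deficit : Fin 5 → ℚ := ![5, 0, 3, -9, -11]

theorem profScore_le_iff_deficit_le (E : ScoreExt) {t : ℕ} (ks : Fin t → ℕ) (K : ℕ)
    (tv : Fin t → Fin 5 → Fin 5 → Prop) (d : Fin 5) :
    profScore 5 scvec E
        ([(20 * K, voteA), (8 * K, voteB)] ++ List.ofFn (fun i => (4 * ks i, tv i))) d ≤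
      profScore 5 scvec E
        ([(20 * K, voteA), (8 * K, voteB)] ++ List.ofFn (fun i => (4 * ks i, tv i))) 1 ↔
    deficit d * K ≤ ∑ i, ks i * lead E (tv i) d := by
  have hnon (c : Fin 5) : profScore 5 scvec E [(20 * K, voteA), (8 * K, voteB)] c =
      20 * K * (![4, 3, 2, 0, 0] : Fin 5 → ℚ) c + 8 * K * (![0, 0, 4, 3, 2] : Fin 5 → ℚ) c := by
    simp [profScore, extScore_voteA, extScore_voteB]
  have hdeficit : 4 * (deficit d * K) =
      profScore 5 scvec E [(20 * K, voteA), (8 * K, voteB)] d -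
        profScore 5 scvec E [(20 * K, voteA), (8 * K, voteB)] 1 := by
    rw [hnon, hnon]
    fin_cases d <;> simp [deficit] <;> ring
  have hlead : 4 * ∑ i, ks i * lead E (tv i) d =
      ∑ i, ((4 * ks i : ℕ) : ℚ) * extScore 5 scvec E (tv i) 1 -
        ∑ i, ((4 * ks i : ℕ) : ℚ) * extScore 5 scvec E (tv i) d := by
    rw [← Finset.sum_sub_distrib, Finset.mul_sum]
    refine Finset.sum_congr rfl fun i _ => ?_
    rw [lead]
    push_cast
    ring
  rw [profScore_append, profScore_append, profScore_ofFn, profScore_ofFn]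
  constructor <;> intro h <;> linarith

theorem deficit_le_lead_add_lead (E : ScoreExt) (d : Fin 5) :
    deficit d ≤ lead E (rankVote (insertionRank 8)) d +
      lead E (rankVote (insertionRank 2)) d := by
  rw [lead_insertionRank_eight, lead_insertionRank_two]
  decide +kernel +revert

end Manipulation

/-- Fix a scoring-rule extension `E` among max, round down, and average.
With nonmanipulators of weight `20K` voting `a₁ > p > b₁ > b₂ > b₃` and of weight `8K`
voting `b₁ > b₂ > b₃ > p > a₁`, and manipulators of weights `4k₁, ..., 4kₜ` (where
`k₁ + ... + kₜ = 2K`, `K ≥ 1`, each `kᵢ > 0`), the manipulators can cast weak-order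
votes, single-peaked w.r.t. the axis `a₁ L p L b₁ L b₂ L b₃`, that make `p` a winner
under `⟨4,3,2,0,0⟩` with extension `E` iff some subcollection of the `kᵢ` sums to `K`. -/
theorem manipulation_43200_weak_orders_iff_partition
    (E : ScoreExt)
    (hE : E = ScoreExt.emax ∨ E = ScoreExt.eroundDown ∨ E = ScoreExt.eaverage)
    (t : ℕ) (ks : Fin t → ℕ) (hks : ∀ i, 0 < ks i) (K : ℕ) (hK : 1 ≤ K)
    (hsum : ∑ i, ks i = 2 * K) :
    (∃ tv : Fin t → (Fin 5 → Fin 5 → Prop),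
      (∀ i, IsWeakOrder (tv i) ∧
        IsSinglePeaked (inferInstance : LinearOrder (Fin 5)) (tv i)) ∧
      (∀ d : Fin 5,
        profScore 5 scvec E
            ([(20 * K, voteA), (8 * K, voteB)] ++ List.ofFn (fun i => (4 * ks i, tv i))) d ≤
          profScore 5 scvec E
            ([(20 * K, voteA), (8 * K, voteB)] ++ List.ofFn (fun i => (4 * ks i, tv i)))
            (1 : Fin 5))) ↔
    (∃ I : Finset (Fin t), ∑ i ∈ I, ks i = K) := by
  constructor
  · rintro ⟨tv, htv, hwin⟩
    simp only [profScore_le_iff_deficit_le] at hwin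
    exact exists_finset_sum_eq_of_leadsBounded hsum
      (fun i => leadsBounded_of_isSinglePeaked hE (htv i).1 (htv i).2) (hwin 0) (hwin 2)
  · rintro ⟨I, hI⟩
    refine ⟨fun i => rankVote (insertionRank (if i ∈ I then 8 else 2)), fun i =>
      ⟨isWeakOrder_rankVote _, isSinglePeaked_insertionRank (by split_ifs <;> decide)⟩,
      fun d => (profScore_le_iff_deficit_le E ks K _ d).2 ?_⟩
    simp only [apply_ite insertionRank, apply_ite rankVote, apply_ite (lead E · d),
      sum_mul_ite_mem_of_sum_eq hsum hI, mul_comm (deficit d)]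
    exact mul_le_mul_of_nonneg_left (deficit_le_lead_add_lead E d) K.cast_nonneg
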